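/- arXiv:2602.05304 — 5 statements merged into one kernel-verified Lean document; each statement's English description precedes it below -/
import Mathlib

section
/- Fix an integer K ≥ 1 and a failure probability δ ∈ (0,1). If τ is an integer with τ ≥ (8N/3)·log(NK/δ), then with probability at least 1 − δ the following holds: for every i ∈ [N] and every k with τ ≤ k ≤ K−1, there exists j with k − τ ≤ j < k and i_j = i (i.e., every component is sampled at least once in every window of τ consecutive iterations up to horizon K, so the staleness k − τ_{i,k} of every component gradient is at most τ). -/
/-!
A fixed element `a` of a finite type `α` is missed by a uniform sample throughout a set of `τ`
coordinates with probability exactly `(1 - |α|⁻¹) ^ τ ≤ exp (-τ / |α|)`. A union bound over the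
elements of `α` and the at most `K` windows bounds the failure probability by
`|α| * K * exp (-τ / |α|)`, which is at most `δ` as soon as `|α| * log (|α| * K / δ) ≤ τ`.
-/

open Finset Fintype

section UniformSampling

variable {ι κ α : Type*} [Fintype ι] [DecidableEq ι] [Fintype α] [DecidableEq α]

lemma card_filter_forall_mem_ne (s : Finset ι) (a : α) :
    #{ω : ι → α | ∀ j ∈ s, ω j ≠ a} = (card α - 1) ^ #s * card α ^ #sᶜ := by
  have filter_eq_piFinset : ({ω : ι → α | ∀ j ∈ s, ω j ≠ a} : Finset (ι → α)) =
      piFinset fun j ↦ if j ∈ s then univ.erase a else univ := by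
    ext ω
    simp only [mem_filter_univ, mem_piFinset]
    refine forall_congr' fun j ↦ ?_
    split_ifs with hj <;> simp [hj]
  rw [filter_eq_piFinset, card_piFinset, ← prod_mul_prod_compl s]
  congr 1
  · exact prod_eq_pow_card fun j hj ↦ by simp [hj, card_erase_of_mem]
  · exact prod_eq_pow_card fun j hj ↦ by simp [mem_compl.1 hj]

lemma dens_filter_forall_mem_ne [Nonempty α] (s : Finset ι) (a : α) :
    (dens {ω : ι → α | ∀ j ∈ s, ω j ≠ a} : ℝ) = (1 - (card α : ℝ)⁻¹) ^ #s := by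
  have card_ne_zero : (card α : ℝ) ≠ 0 := by simp
  have one_sub_inv : 1 - (card α : ℝ)⁻¹ = (card α - 1) / card α := by field_simp
  rw [nnratCast_dens, card_filter_forall_mem_ne, card_fun, ← card_add_card_compl s, pow_add,
    one_sub_inv, div_pow]
  push_cast [Nat.cast_pred (card_pos (α := α))]
  exact mul_div_mul_right _ _ (pow_ne_zero _ card_ne_zero)

lemma dens_filter_forall_mem_ne_le_exp [Nonempty α] (s : Finset ι) (a : α) :
    (dens {ω : ι → α | ∀ j ∈ s, ω j ≠ a} : ℝ) ≤ Real.exp (-(#s / card α)) := by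
  have inv_card_le_one : (card α : ℝ)⁻¹ ≤ 1 := Nat.cast_inv_le_one _
  calc (dens {ω : ι → α | ∀ j ∈ s, ω j ≠ a} : ℝ)
      = (1 - (card α : ℝ)⁻¹) ^ #s := dens_filter_forall_mem_ne s a
    _ ≤ Real.exp (-(card α : ℝ)⁻¹) ^ #s :=
      pow_le_pow_left₀ (sub_nonneg.2 inv_card_le_one) (Real.one_sub_le_exp_neg _) _
    _ = Real.exp (-(#s / card α)) := by
      rw [← Real.exp_nat_mul, mul_neg, div_eq_mul_inv]

lemma dens_filter_exists_forall_mem_ne_le [Nonempty α] (t : Finset κ) (s : κ → Finset ι) {τ : ℕ}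
    (hs : ∀ k ∈ t, τ ≤ #(s k)) :
    (dens {ω : ι → α | ∃ a, ∃ k ∈ t, ∀ j ∈ s k, ω j ≠ a} : ℝ) ≤
      card α * #t * Real.exp (-(τ / card α)) := by
  have filter_eq_biUnion : ({ω : ι → α | ∃ a, ∃ k ∈ t, ∀ j ∈ s k, ω j ≠ a} : Finset (ι → α)) =
      (univ ×ˢ t).biUnion fun p : α × κ ↦ {ω | ∀ j ∈ s p.2, ω j ≠ p.1} := by
    ext ω
    simp
  calc (dens {ω : ι → α | ∃ a, ∃ k ∈ t, ∀ j ∈ s k, ω j ≠ a} : ℝ)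
      ≤ ∑ p ∈ univ ×ˢ t, (dens {ω : ι → α | ∀ j ∈ s p.2, ω j ≠ p.1} : ℝ) := by
        rw [filter_eq_biUnion]
        exact_mod_cast dens_biUnion_le
    _ ≤ ∑ _p ∈ (univ : Finset α) ×ˢ t, Real.exp (-(τ / card α)) := by
        refine sum_le_sum fun p hp ↦ (dens_filter_forall_mem_ne_le_exp _ _).trans ?_
        gcongr
        exact hs p.2 (mem_product.1 hp).2
    _ = card α * #t * Real.exp (-(τ / card α)) := by simp

lemma one_sub_le_dens_filter_forall_exists_mem_eq [Nonempty α] (t : Finset κ) (s : κ → Finset ι)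
    {τ : ℕ} (hs : ∀ k ∈ t, τ ≤ #(s k)) :
    1 - card α * #t * Real.exp (-(τ / card α)) ≤
      (dens {ω : ι → α | ∀ a, ∀ k ∈ t, ∃ j ∈ s k, ω j = a} : ℝ) := by
  have dens_add_dens_not :
      (dens {ω : ι → α | ∀ a, ∀ k ∈ t, ∃ j ∈ s k, ω j = a} : ℝ) +
        dens {ω : ι → α | ∃ a, ∃ k ∈ t, ∀ j ∈ s k, ω j ≠ a} = 1 := by
    have h := dens_filter_add_dens_filter_not_eq_dens (s := univ)
      fun ω : ι → α ↦ ∀ a, ∀ k ∈ t, ∃ j ∈ s k, ω j = a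
    push Not at h
    exact_mod_cast h.trans dens_univ
  linarith [dens_filter_exists_forall_mem_ne_le (α := α) t s hs]

end UniformSampling

/-- The window of the (at most `τ`) iterations immediately before iteration `k`, among the
iterations `0, …, K - 1`. The subtraction is truncated, so for `k < τ` the window is cut off at
iteration `0`. -/
def samplingWindow (K τ k : ℕ) : Finset (Fin K) := {j | k - τ ≤ (j : ℕ) ∧ (j : ℕ) < k}

lemma mem_samplingWindow {K τ k : ℕ} {j : Fin K} :
    j ∈ samplingWindow K τ k ↔ k - τ ≤ (j : ℕ) ∧ (j : ℕ) < k :=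
  mem_filter_univ j

lemma card_samplingWindow {K τ k : ℕ} (hτk : τ ≤ k) (hkK : k ≤ K) :
    #(samplingWindow K τ k) = τ := by
  have map_eq_Ico : (samplingWindow K τ k).map Fin.valEmbedding = Ico (k - τ) k := by
    ext j
    simp only [mem_map, mem_samplingWindow, Fin.valEmbedding_apply, mem_Ico]
    exact ⟨by rintro ⟨j, hj, rfl⟩; exact hj, fun hj ↦ ⟨⟨j, hj.2.trans_le hkK⟩, hj, rfl⟩⟩
  rw [← card_map Fin.valEmbedding, map_eq_Ico, Nat.card_Ico, Nat.sub_sub_self hτk]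

lemma mul_exp_neg_le_of_log_div_le {x t δ : ℝ} (hδ : 0 < δ) (h : Real.log (x / δ) ≤ t) :
    x * Real.exp (-t) ≤ δ := by
  have div_le_exp : x / δ ≤ Real.exp t := (Real.le_exp_log _).trans (Real.exp_le_exp.2 h)
  rw [Real.exp_neg, ← div_eq_mul_inv, div_le_iff₀ (Real.exp_pos t)]
  exact (div_le_iff₀' hδ).1 div_le_exp

open Classical in
theorem bounded_staleness_high_prob_general {α : Type*} [Fintype α] [Nonempty α]
    (K τ : ℕ) {δ : ℝ} (hδ : 0 < δ) (hτ : card α * Real.log (card α * K / δ) ≤ τ) :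
    1 - δ ≤ (dens {ω : Fin K → α | ∀ a, ∀ k, τ ≤ k → k < K →
      ∃ j : Fin K, k - τ ≤ (j : ℕ) ∧ (j : ℕ) < k ∧ ω j = a} : ℝ) := by
  have card_cast_pos : (0 : ℝ) < card α := by simp [Fintype.card_pos]
  have windows_card_le : (#(Ico τ K) : ℝ) ≤ K := by simp
  have failure_le : card α * K * Real.exp (-(τ / card α)) ≤ δ :=
    mul_exp_neg_le_of_log_div_le hδ ((le_div_iff₀' card_cast_pos).2 hτ)
  have window_card_ge : ∀ k ∈ Ico τ K, τ ≤ #(samplingWindow K τ k) := fun k hk ↦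
    (card_samplingWindow (mem_Ico.1 hk).1 (mem_Ico.1 hk).2.le).ge
  calc 1 - δ
      ≤ 1 - card α * #(Ico τ K) * Real.exp (-(τ / card α)) := by grw [windows_card_le, failure_le]
    _ ≤ dens {ω : Fin K → α | ∀ a, ∀ k, τ ≤ k → k < K →
          ∃ j : Fin K, k - τ ≤ (j : ℕ) ∧ (j : ℕ) < k ∧ ω j = a} := by
      convert one_sub_le_dens_filter_forall_exists_mem_eq (α := α) _ _ window_card_ge using 4 with ω
      simp only [mem_Ico, mem_samplingWindow, and_imp, and_assoc]

/- STATEMENT 0 (Bounded staleness with high probability under i.i.d. uniform sampling).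
The sampling sequence is modeled as `ω : Fin K → Fin N`, uniformly distributed (the i.i.d.
uniform product measure), so the probability of an event is its cardinality divided by `N ^ K`. -/
open Classical in
theorem bounded_staleness_high_prob (N K : ℕ) (hN : 1 ≤ N) (hK : 1 ≤ K)
    (δ : ℝ) (hδ0 : 0 < δ) (hδ1 : δ < 1)
    (τ : ℕ) (hτ : (8 * (N : ℝ) / 3) * Real.log ((N : ℝ) * K / δ) ≤ (τ : ℝ)) :
    1 - δ ≤
      (Finset.univ.filter (fun ω : Fin K → Fin N =>
          ∀ i : Fin N, ∀ k : ℕ, τ ≤ k → k ≤ K - 1 →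
            ∃ j : Fin K, k - τ ≤ (j : ℕ) ∧ (j : ℕ) < k ∧ ω j = i)).card / (N : ℝ) ^ K := by
  have : NeZero N := ⟨by lia⟩
  have one_le_mul : (1 : ℝ) ≤ N * K := by exact_mod_cast Nat.mul_pos hN hK
  have log_nonneg : 0 ≤ Real.log (N * K / δ) :=
    Real.log_nonneg ((one_le_div hδ0).2 (hδ1.le.trans one_le_mul))
  have hτ' : N * Real.log (N * K / δ) ≤ τ := by
    linarith [mul_nonneg (Nat.cast_nonneg N) log_nonneg]
  simpa [nnratCast_dens, Nat.le_sub_one_iff_lt hK] using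
    bounded_staleness_high_prob_general (α := Fin N) K τ hδ0 (by simpa using hτ')
end

section
/- Let f : ℝ^d → ℝ be differentiable with L-Lipschitz gradient, L > 0, and suppose f attains a global minimum value f* = f(x*). For any points x, g ∈ ℝ^d and any step size α with 0 < α ≤ 1/(4L), setting x' = x − α g, one has f(x') − f* ≤ (f(x) − f*) − (α/4)·‖∇f(x)‖² + α·‖g − ∇f(x)‖². -/
/-!
Along the segment from `x` to `y` the derivative of `f` moves away from its value at `x` at most
linearly, so `f` exceeds its linearization at `x` by at most `L / 2 * ‖y - x‖ ^ 2`. For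
`y = x - α • g`, polarization gives
`-α * ⟪∇ f x, g⟫ = α / 2 * (‖g - ∇ f x‖ ^ 2 - ‖∇ f x‖ ^ 2 - ‖g‖ ^ 2)`, and as soon as `L * α ≤ 1`
the term `-α / 2 * ‖g‖ ^ 2` absorbs the quadratic error `L / 2 * α ^ 2 * ‖g‖ ^ 2`.
-/

open Set AffineMap
open scoped Gradient

section LinearApproximation

variable {E G : Type*} [NormedAddCommGroup E] [NormedSpace ℝ E]
  [NormedAddCommGroup G] [NormedSpace ℝ G]

theorem norm_image_sub_sub_smul_le_of_norm_deriv_sub_le_segment {φ φ' : ℝ → G} {a b C : ℝ}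
    (hφ : ∀ t ∈ Icc a b, HasDerivWithinAt φ (φ' t) (Icc a b) t)
    (bound : ∀ t ∈ Ico a b, ‖φ' t - φ' a‖ ≤ C * (t - a)) :
    ∀ t ∈ Icc a b, ‖φ t - φ a - (t - a) • φ' a‖ ≤ C / 2 * (t - a) ^ 2 := by
  have hasDerivWithinAt_remainder : ∀ t ∈ Icc a b,
      HasDerivWithinAt (fun r ↦ φ r - φ a - (r - a) • φ' a) (φ' t - φ' a) (Icc a b) t :=
    fun t ht ↦ by
      simpa using ((hφ t ht).sub_const (φ a)).fun_sub
        (((hasDerivWithinAt_id t _).sub_const a).smul_const (φ' a))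
  have hasDerivAt_bound (t : ℝ) : HasDerivAt (fun r ↦ C / 2 * (r - a) ^ 2) (C * (t - a)) t := by
    refine ((((hasDerivAt_id' t).sub_const a).fun_pow 2).const_mul (C / 2)).congr_deriv ?_
    simp only [Nat.cast_ofNat, Nat.reduceSub, pow_one, mul_one]
    ring
  exact image_norm_le_of_norm_deriv_right_le_deriv_boundary
    (fun t ht ↦ (hasDerivWithinAt_remainder t ht).continuousWithinAt)
    (fun t ht ↦ (hasDerivWithinAt_remainder t (Ico_subset_Icc_self ht)).mono_of_mem_nhdsWithin
      (Icc_mem_nhdsGE_of_mem ht))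
    (by simp) hasDerivAt_bound bound

theorem norm_image_sub_sub_le_of_norm_hasFDerivWithin_sub_le {f : E → G}
    {f' : E → E →L[ℝ] G} {L : ℝ} {s : Set E} {x y : E} (hs : Convex ℝ s)
    (hf : ∀ z ∈ s, HasFDerivWithinAt f (f' z) s z)
    (bound : ∀ z ∈ s, ‖f' z - f' x‖ ≤ L * ‖z - x‖) (hx : x ∈ s) (hy : y ∈ s) :
    ‖f y - f x - f' x (y - x)‖ ≤ L / 2 * ‖y - x‖ ^ 2 := by
  have mapsTo_line : MapsTo (lineMap x y : ℝ → E) (Icc 0 1) s := hs.mapsTo_lineMap hx hy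
  have hasDerivWithinAt_comp_line : ∀ t ∈ Icc (0 : ℝ) 1,
      HasDerivWithinAt (f ∘ lineMap x y) (f' (lineMap x y t) (y - x)) (Icc 0 1) t := fun t ht ↦
    (hf _ (mapsTo_line ht)).comp_hasDerivWithinAt t hasDerivWithinAt_lineMap mapsTo_line
  have deriv_sub_le : ∀ t ∈ Ico (0 : ℝ) 1,
      ‖f' (lineMap x y t) (y - x) - f' (lineMap x y (0 : ℝ)) (y - x)‖
        ≤ L * ‖y - x‖ ^ 2 * (t - 0) := fun t ht ↦
    calc ‖f' (lineMap x y t) (y - x) - f' (lineMap x y (0 : ℝ)) (y - x)‖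
        = ‖(f' (lineMap x y t) - f' x) (y - x)‖ := by simp
      _ ≤ ‖f' (lineMap x y t) - f' x‖ * ‖y - x‖ := ContinuousLinearMap.le_opNorm _ _
      _ ≤ L * ‖lineMap x y t - x‖ * ‖y - x‖ := by
        gcongr
        exact bound _ (mapsTo_line (Ico_subset_Icc_self ht))
      _ = L * ‖y - x‖ ^ 2 * (t - 0) := by
        rw [← vsub_eq_sub, lineMap_vsub_left, vsub_eq_sub, norm_smul, Real.norm_of_nonneg ht.1]
        ring
  simpa [mul_div_right_comm] using norm_image_sub_sub_smul_le_of_norm_deriv_sub_le_segment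
    hasDerivWithinAt_comp_line deriv_sub_le 1 (right_mem_Icc.2 zero_le_one)

end LinearApproximation

section ApproximateGradientStep

variable {F : Type*} [NormedAddCommGroup F] [InnerProductSpace ℝ F] [CompleteSpace F]
  {f : F → ℝ} {L : ℝ} {x : F}

theorem le_add_inner_gradient_add_of_norm_gradient_sub_le (hf : Differentiable ℝ f)
    (hL : ∀ y, ‖∇ f y - ∇ f x‖ ≤ L * ‖y - x‖) (y : F) :
    f y ≤ f x + inner ℝ (∇ f x) (y - x) + L / 2 * ‖y - x‖ ^ 2 := by
  have remainder_le := norm_image_sub_sub_le_of_norm_hasFDerivWithin_sub_le convex_univ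
    (fun z _ ↦ (hf z).hasGradientAt.hasFDerivAt.hasFDerivWithinAt)
    (fun z _ ↦ by rw [← map_sub, LinearIsometryEquiv.norm_map]; exact hL z)
    (mem_univ x) (mem_univ y)
  rw [InnerProductSpace.toDual_apply_apply] at remainder_le
  linarith [Real.le_norm_self (f y - f x - inner ℝ (∇ f x) (y - x))]

theorem approx_descent_general (hf : Differentiable ℝ f)
    (hL : ∀ y, ‖∇ f y - ∇ f x‖ ≤ L * ‖y - x‖) (g : F) {α : ℝ} (hα : 0 ≤ α) (hLα : L * α ≤ 1) :
    f (x - α • g) ≤ f x - α / 2 * ‖∇ f x‖ ^ 2 + α / 2 * ‖g - ∇ f x‖ ^ 2 := by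
  have polarization : ‖g - ∇ f x‖ ^ 2 = ‖g‖ ^ 2 - 2 * inner ℝ (∇ f x) g + ‖∇ f x‖ ^ 2 := by
    rw [norm_sub_sq_real, real_inner_comm]
  have quadratic_error_le : L * α * (α / 2 * ‖g‖ ^ 2) ≤ α / 2 * ‖g‖ ^ 2 :=
    mul_le_of_le_one_left (by positivity) hLα
  calc f (x - α • g)
      ≤ f x + inner ℝ (∇ f x) (x - α • g - x) + L / 2 * ‖x - α • g - x‖ ^ 2 :=
        le_add_inner_gradient_add_of_norm_gradient_sub_le hf hL _
    _ = f x - α * inner ℝ (∇ f x) g + L * α * (α / 2 * ‖g‖ ^ 2) := by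
        rw [sub_sub_cancel_left, inner_neg_right, inner_smul_right, norm_neg, norm_smul,
          Real.norm_of_nonneg hα]
        ring
    _ ≤ f x - α * inner ℝ (∇ f x) g + α / 2 * ‖g‖ ^ 2 := by gcongr
    _ = f x - α / 2 * ‖∇ f x‖ ^ 2 + α / 2 * ‖g - ∇ f x‖ ^ 2 := by rw [polarization]; ring

end ApproximateGradientStep

/-- Approximate descent step. -/
theorem approx_descent (d : ℕ) (hd : 1 ≤ d) (L : ℝ) (hL : 0 < L)
    (f : EuclideanSpace ℝ (Fin d) → ℝ)
    (hdiff : Differentiable ℝ f)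
    (hsmooth : ∀ x y, ‖gradient f x - gradient f y‖ ≤ L * ‖x - y‖)
    (xstar : EuclideanSpace ℝ (Fin d))
    (hmin : ∀ y, f xstar ≤ f y)
    (x g : EuclideanSpace ℝ (Fin d)) (α : ℝ) (hα0 : 0 < α) (hα : α ≤ 1 / (4 * L)) :
    f (x - α • g) - f xstar ≤
      (f x - f xstar) - (α / 4) * ‖gradient f x‖ ^ 2 + α * ‖g - gradient f x‖ ^ 2 := by
  have hLα : L * α ≤ 1 := by
    rw [le_div_iff₀ (by positivity)] at hα
    linarith
  have descent := approx_descent_general hdiff (hsmooth · x) g hα0.le hLα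
  have gradient_term_nonneg : 0 ≤ α * ‖∇ f x‖ ^ 2 := by positivity
  have error_term_nonneg : 0 ≤ α * ‖g - ∇ f x‖ ^ 2 := by positivity
  linarith
end

section
/- Fix integers τ ≥ 1 and K > τ. If the sampling sequence has staleness bounded by τ up to horizon K, then for every k with τ ≤ k ≤ K−1, the SAG gradient error e_k := g_k − ∇f(x_k) satisfies ‖e_k‖² ≤ 4 α² L² τ · U_k, where U_k := Σ_{j=1}^τ ‖g_{k−j}‖². -/
/-!
The SAG direction `g k` is the average over `i` of the gradient table *after* its `k`-th update.
By bounded staleness every entry of that table is some `∇ fᵢ (x j)` with `k - τ ≤ j ≤ k`, so by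
smoothness it is within `L * ‖x j - x k‖` of `∇ fᵢ (x k)`, and the path from `x j` to `x k` has
length at most `α` times the sum of the last `τ` direction norms. Averaging over `i`, squaring and
applying Cauchy–Schwarz to that sum gives the bound, in fact with constant `1` in place of `4`.
-/

open Finset
open scoped Gradient NNReal ComplexConjugate

section Gradient

variable {𝕜 E ι : Type*} [RCLike 𝕜] [NormedAddCommGroup E] [InnerProductSpace 𝕜 E] [CompleteSpace E]
  {x : E}

theorem gradient_fun_sum {s : Finset ι} {f : ι → E → 𝕜}
    (hf : ∀ i ∈ s, DifferentiableAt 𝕜 (f i) x) :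
    ∇ (fun z => ∑ i ∈ s, f i z) x = ∑ i ∈ s, ∇ (f i) x := by
  simp only [gradient, fderiv_fun_sum hf, map_sum]

theorem gradient_fun_div_const (f : E → 𝕜) (c : 𝕜) :
    ∇ (fun z => f z / c) x = (conj c)⁻¹ • ∇ f x := by
  have hfun : (fun z => f z / c) = c⁻¹ • f := funext fun z => div_eq_inv_mul (f z) c
  simp only [hfun, gradient, fderiv_const_smul_field, Pi.smul_apply, map_smulₛₗ, map_inv₀]

end Gradient

theorem norm_inv_card_smul_sum_le {ι E : Type*} [Fintype ι] [Nonempty ι] [SeminormedAddCommGroup E]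
    [NormedSpace ℝ E] {v : ι → E} {C : ℝ} (hv : ∀ i, ‖v i‖ ≤ C) :
    ‖(Fintype.card ι : ℝ)⁻¹ • ∑ i, v i‖ ≤ C := by
  have hcard : (0 : ℝ) < Fintype.card ι := mod_cast Fintype.card_pos
  rw [norm_smul, norm_inv, RCLike.norm_natCast, inv_mul_le_iff₀ hcard, ← nsmul_eq_mul]
  exact norm_sum_le_of_le univ (fun i _ => hv i) |>.trans_eq (by simp)

theorem dist_le_norm_mul_sum_Ico_of_succ_eq_sub_smul {𝕜 E : Type*} [NormedField 𝕜]
    [SeminormedAddCommGroup E] [NormedSpace 𝕜 E] {α : 𝕜} {x g : ℕ → E}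
    (hx : ∀ k, x (k + 1) = x k - α • g k) {m n : ℕ} (hmn : m ≤ n) :
    dist (x m) (x n) ≤ ‖α‖ * ∑ j ∈ Ico m n, ‖g j‖ := by
  have hstep (j : ℕ) : dist (x j) (x (j + 1)) = ‖α‖ * ‖g j‖ := by
    rw [hx, dist_self_sub_right, norm_smul]
  simpa only [hstep, mul_sum] using dist_le_Ico_sum_dist x hmn

theorem sum_Icc_one_sub_eq_sum_Ico {M : Type*} [AddCommMonoid M] (u : ℕ → M) {τ k : ℕ} (h : τ ≤ k) :
    ∑ j ∈ Icc 1 τ, u (k - j) = ∑ j ∈ Ico (k - τ) k, u j := by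
  simpa only [Ico_add_one_right_eq_Icc, Nat.add_sub_add_right, Nat.add_sub_cancel] using
    sum_Ico_reflect u 1 (Nat.add_le_add_right h 1)

/-- The recursion of the stochastic average gradient method with step size `α` and sampled indices
`idx`, for arbitrary vector fields `G i` in place of the component gradients: `x k` is the iterate,
`g k` the search direction and `h i k` the table entry of component `i` before iteration `k`.
The starting point and the initial table are left free. -/
structure IsSAG {ι E : Type*} [Fintype ι] [DecidableEq ι] [AddCommGroup E] [Module ℝ E]
    (G : ι → E → E) (idx : ℕ → ι) (α : ℝ) (x g : ℕ → E) (h : ι → ℕ → E) : Prop where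
  table_succ : ∀ i k, h i (k + 1) = if idx k = i then G i (x k) else h i k
  direction : ∀ k, g k = (Fintype.card ι : ℝ)⁻¹ • (∑ i, h i k)
    + (Fintype.card ι : ℝ)⁻¹ • (G (idx k) (x k) - h (idx k) k)
  iterate_succ : ∀ k, x (k + 1) = x k - α • g k

namespace IsSAG

section Module

variable {ι E : Type*} [Fintype ι] [DecidableEq ι] [AddCommGroup E] [Module ℝ E]
  {G : ι → E → E} {idx : ℕ → ι} {α : ℝ} {x g : ℕ → E} {h : ι → ℕ → E}

theorem exists_table_eq_of_sampled (hS : IsSAG G idx α x g h) {i : ι} {m n : ℕ}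
    (hi : ∃ j, m ≤ j ∧ j < n ∧ idx j = i) : ∃ j, m ≤ j ∧ j < n ∧ h i n = G i (x j) := by
  induction n with
  | zero => simp at hi
  | succ n ih =>
    obtain ⟨j, hmj, hjn, hji⟩ := hi
    by_cases hn : idx n = i
    · exact ⟨n, by omega, n.lt_succ_self, by rw [hS.table_succ, if_pos hn]⟩
    · have hj_ne : j ≠ n := fun hj => hn (hj ▸ hji)
      obtain ⟨l, hml, hln, hl⟩ := ih ⟨j, hmj, by omega, hji⟩
      exact ⟨l, hml, hln.trans n.lt_succ_self, by rw [hS.table_succ, if_neg hn, hl]⟩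

theorem direction_eq_average_table_succ (hS : IsSAG G idx α x g h) (k : ℕ) :
    g k = (Fintype.card ι : ℝ)⁻¹ • ∑ i, h i (k + 1) := by
  have hupdate (i : ι) :
      h i (k + 1) = h i k + if idx k = i then G i (x k) - h i k else 0 := by
    rw [hS.table_succ]
    split_ifs <;> simp
  simp only [hS.direction, hupdate, sum_add_distrib, sum_ite_eq, mem_univ, if_true, smul_add]

end Module

variable {ι E : Type*} [Fintype ι] [DecidableEq ι] [SeminormedAddCommGroup E] [NormedSpace ℝ E]
  {G : ι → E → E} {idx : ℕ → ι} {α : ℝ} {x g : ℕ → E} {h : ι → ℕ → E} {L : ℝ≥0} {m k : ℕ}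

theorem norm_table_succ_sub_le (hS : IsSAG G idx α x g h) {i : ι} (hG : LipschitzWith L (G i))
    (hi : ∃ j, m ≤ j ∧ j < k ∧ idx j = i) :
    ‖h i (k + 1) - G i (x k)‖ ≤ L * (|α| * ∑ j ∈ Ico m k, ‖g j‖) := by
  obtain ⟨l, hml, hlk, hli⟩ := hi
  obtain ⟨j, hmj, hjk, hj⟩ :=
    hS.exists_table_eq_of_sampled ⟨l, hml, hlk.trans k.lt_succ_self, hli⟩
  calc ‖h i (k + 1) - G i (x k)‖ = dist (G i (x j)) (G i (x k)) := by rw [hj, dist_eq_norm]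
    _ ≤ L * dist (x j) (x k) := hG.dist_le_mul _ _
    _ ≤ L * (|α| * ∑ t ∈ Ico j k, ‖g t‖) := by
      gcongr
      exact dist_le_norm_mul_sum_Ico_of_succ_eq_sub_smul hS.iterate_succ (Nat.le_of_lt_succ hjk)
    _ ≤ L * (|α| * ∑ j ∈ Ico m k, ‖g j‖) := by gcongr

theorem norm_direction_sub_average_le (hS : IsSAG G idx α x g h) (hG : ∀ i, LipschitzWith L (G i))
    (hstale : ∀ i, ∃ j, m ≤ j ∧ j < k ∧ idx j = i) :
    ‖g k - (Fintype.card ι : ℝ)⁻¹ • ∑ i, G i (x k)‖ ≤ L * (|α| * ∑ j ∈ Ico m k, ‖g j‖) := by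
  have : Nonempty ι := ⟨idx k⟩
  rw [hS.direction_eq_average_table_succ, ← smul_sub, ← sum_sub_distrib]
  exact norm_inv_card_smul_sum_le fun i => hS.norm_table_succ_sub_le (hG i) (hstale i)

theorem norm_direction_sub_average_sq_le (hS : IsSAG G idx α x g h)
    (hG : ∀ i, LipschitzWith L (G i)) (hstale : ∀ i, ∃ j, m ≤ j ∧ j < k ∧ idx j = i) :
    ‖g k - (Fintype.card ι : ℝ)⁻¹ • ∑ i, G i (x k)‖ ^ 2 ≤
      α ^ 2 * L ^ 2 * (k - m : ℕ) * ∑ j ∈ Ico m k, ‖g j‖ ^ 2 := by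
  have hcauchy : (∑ j ∈ Ico m k, ‖g j‖) ^ 2 ≤ (k - m : ℕ) * ∑ j ∈ Ico m k, ‖g j‖ ^ 2 := by
    simpa only [Nat.card_Ico] using sq_sum_le_card_mul_sum_sq (s := Ico m k) (f := fun j => ‖g j‖)
  calc ‖g k - (Fintype.card ι : ℝ)⁻¹ • ∑ i, G i (x k)‖ ^ 2
      ≤ (L * (|α| * ∑ j ∈ Ico m k, ‖g j‖)) ^ 2 := by
        gcongr
        exact hS.norm_direction_sub_average_le hG hstale
    _ = α ^ 2 * L ^ 2 * (∑ j ∈ Ico m k, ‖g j‖) ^ 2 := by rw [mul_pow, mul_pow, sq_abs]; ring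
    _ ≤ α ^ 2 * L ^ 2 * ((k - m : ℕ) * ∑ j ∈ Ico m k, ‖g j‖ ^ 2) := by gcongr
    _ = α ^ 2 * L ^ 2 * (k - m : ℕ) * ∑ j ∈ Ico m k, ‖g j‖ ^ 2 := by ring

end IsSAG

theorem sag_gradient_error_general {ι E : Type*} [Fintype ι] [DecidableEq ι]
    [NormedAddCommGroup E] [InnerProductSpace ℝ E] [CompleteSpace E] {f : ι → E → ℝ} {idx : ℕ → ι}
    {α : ℝ} {x g : ℕ → E} {h : ι → ℕ → E} {L : ℝ≥0} {τ k : ℕ}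
    (hS : IsSAG (fun i => ∇ (f i)) idx α x g h) (hf : ∀ i, Differentiable ℝ (f i))
    (hL : ∀ i, LipschitzWith L (∇ (f i))) (hk : τ ≤ k)
    (hstale : ∀ i, ∃ j, k - τ ≤ j ∧ j < k ∧ idx j = i) :
    ‖g k - ∇ (fun z => (∑ i, f i z) / Fintype.card ι) (x k)‖ ^ 2 ≤
      α ^ 2 * L ^ 2 * τ * ∑ j ∈ Icc 1 τ, ‖g (k - j)‖ ^ 2 := by
  have hgrad : ∇ (fun z => (∑ i, f i z) / Fintype.card ι) (x k) =
      (Fintype.card ι : ℝ)⁻¹ • ∑ i, ∇ (f i) (x k) := by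
    rw [gradient_fun_div_const, gradient_fun_sum fun i _ => hf i (x k), conj_trivial]
  rw [hgrad, sum_Icc_one_sub_eq_sum_Ico (fun j => ‖g j‖ ^ 2) hk]
  simpa only [Nat.sub_sub_self hk] using hS.norm_direction_sub_average_sq_le hL hstale

/- STATEMENT 3 (SAG gradient error bound under bounded staleness). -/
theorem sag_gradient_error (d N : ℕ) (hd : 1 ≤ d) (hN : 1 ≤ N) (L : ℝ) (hL : 0 < L)
    (fi : Fin N → EuclideanSpace ℝ (Fin d) → ℝ)
    (hdiff : ∀ i, Differentiable ℝ (fi i))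
    (hsmooth : ∀ i x y, ‖gradient (fi i) x - gradient (fi i) y‖ ≤ L * ‖x - y‖)
    (f : EuclideanSpace ℝ (Fin d) → ℝ)
    (hf : ∀ z, f z = (∑ i, fi i z) / N)
    (idx : ℕ → Fin N) (α : ℝ) (hα : 0 < α)
    (x g : ℕ → EuclideanSpace ℝ (Fin d))
    (h : Fin N → ℕ → EuclideanSpace ℝ (Fin d))
    (hx0 : x 0 = 0)
    (hh0 : ∀ i, h i 0 = 0)
    (hhrec : ∀ i k, h i (k + 1) = if idx k = i then gradient (fi i) (x k) else h i k)
    (hg : ∀ k, g k = (N : ℝ)⁻¹ • (∑ i, h i k)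
      + (N : ℝ)⁻¹ • (gradient (fi (idx k)) (x k) - h (idx k) k))
    (hxrec : ∀ k, x (k + 1) = x k - α • g k)
    (τ K : ℕ) (hτ : 1 ≤ τ) (hK : τ < K)
    (hstale : ∀ i : Fin N, ∀ k : ℕ, τ ≤ k → k ≤ K - 1 →
      ∃ j : ℕ, k - τ ≤ j ∧ j < k ∧ idx j = i) :
    ∀ k : ℕ, τ ≤ k → k ≤ K - 1 →
      ‖g k - gradient f (x k)‖ ^ 2 ≤
        4 * α ^ 2 * L ^ 2 * τ * ∑ j ∈ Finset.Icc 1 τ, ‖g (k - j)‖ ^ 2 := by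
  intro k hk hkK
  lift L to ℝ≥0 using hL.le
  have hS : IsSAG (fun i => ∇ (fi i)) idx α x g h := ⟨hhrec, by simpa using hg, hxrec⟩
  have hbound := sag_gradient_error_general hS hdiff
    (fun i => lipschitzWith_iff_norm_sub_le.2 (hsmooth i)) hk fun i => hstale i k hk hkK
  rw [Fintype.card_fin, ← funext hf] at hbound
  refine hbound.trans ?_
  gcongr
  exact le_mul_of_one_le_left (sq_nonneg α) (by norm_num)
end

section
/- Fix integers τ ≥ 1 and K > τ + 1, and set α = 1/(16 L τ). If the sampling sequence has staleness bounded by τ up to horizon K and f is μ-strongly convex (μ > 0), then the SAG Lyapunov function satisfies V_{k+1} ≤ (1 − αμ/4)·V_k for every k with τ ≤ k ≤ K−2. -/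
open scoped RealInnerProductSpace

/-!
Once every index has been sampled in the last `τ` steps, `g_k` is the average of component gradients
at iterates at most `τ - 1` steps old. By smoothness its distance to `∇f(x_k)` is at most
`Lα ∑_{j=1}^τ ‖g_{k-j}‖`, whose square is at most `(Lα)² τ ∑_{j=1}^τ ‖g_{k-j}‖²`. The descent
lemma turns the step into a decrease of `f` by multiples of `‖∇f(x_k)‖²` and `‖g_k‖²`, up to this
error. Passing from `W_k` to `W_{k+1}` costs `τ‖g_k‖²`, which the decrease in `‖g_k‖²` pays for, and
releases `∑_{j=1}^τ ‖g_{k-j}‖² ≥ W_k / τ`, which pays for both the error and the contraction of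
`W_k`. The Polyak–Łojasiewicz inequality converts the decrease in `‖∇f(x_k)‖²` into contraction of
`f(x_k) - f(x*)`.
-/

open Finset
open scoped NNReal

section WindowSums

/-- The sum of the `τ` terms of `a` before index `k`. The indices `k - j` are truncated, so this is
the intended sum only for `τ ≤ k`. -/
def windowSum (τ : ℕ) (a : ℕ → ℝ) (k : ℕ) : ℝ :=
  ∑ j ∈ Icc 1 τ, a (k - j)

/-- The sum of the `τ` terms of `a` before index `k`, the term at lag `j` weighted by the number
`τ - j + 1` of steps it still spends in the window; for `a = ‖g ·‖²` this is the paper's `W_k`.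
As for `windowSum`, the intended range is `τ ≤ k`. -/
def weightedWindowSum (τ : ℕ) (a : ℕ → ℝ) (k : ℕ) : ℝ :=
  ∑ j ∈ Icc 1 τ, ((τ : ℝ) - j + 1) * a (k - j)

variable {τ k : ℕ} {a : ℕ → ℝ}

lemma windowSum_eq_sum_Ico (hk : τ ≤ k) : windowSum τ a k = ∑ i ∈ Ico (k - τ) k, a i := by
  rw [windowSum, ← Ico_add_one_right_eq_Icc, sum_Ico_reflect a 1 (Nat.add_le_add_right hk 1),
    Nat.add_sub_add_right, Nat.add_sub_cancel]

lemma windowSum_nonneg (ha : ∀ i, 0 ≤ a i) : 0 ≤ windowSum τ a k :=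
  sum_nonneg fun _ _ ↦ ha _

lemma sq_windowSum_le : windowSum τ a k ^ 2 ≤ τ * windowSum τ (fun i ↦ a i ^ 2) k := by
  simpa [windowSum] using sq_sum_le_card_mul_sum_sq (s := Icc 1 τ) (f := fun j ↦ a (k - j))

lemma weightedWindowSum_nonneg (ha : ∀ i, 0 ≤ a i) : 0 ≤ weightedWindowSum τ a k := by
  refine sum_nonneg fun j hj ↦ mul_nonneg ?_ (ha _)
  have hjτ : (j : ℝ) ≤ τ := by exact_mod_cast (mem_Icc.1 hj).2
  linarith

lemma weightedWindowSum_le_mul_windowSum (ha : ∀ i, 0 ≤ a i) :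
    weightedWindowSum τ a k ≤ τ * windowSum τ a k := by
  rw [weightedWindowSum, windowSum, mul_sum]
  refine sum_le_sum fun j hj ↦ mul_le_mul_of_nonneg_right ?_ (ha _)
  have hj1 : (1 : ℝ) ≤ j := by exact_mod_cast (mem_Icc.1 hj).1
  linarith

lemma weightedWindowSum_succ (τ k : ℕ) (a : ℕ → ℝ) :
    weightedWindowSum τ a (k + 1) = τ * a k + weightedWindowSum τ a k - windowSum τ a k := by
  let u : ℕ → ℝ := fun j ↦ ((τ : ℝ) - j) * a (k - j)
  have telescope : ∑ j ∈ range τ, (u j - u (j + 1)) = τ * a k := by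
    rw [sum_range_sub']
    simp [u]
  simp only [weightedWindowSum, windowSum, ← Ico_add_one_right_eq_Icc, sum_Ico_eq_sum_range,
    Nat.add_sub_cancel]
  rw [← telescope, ← sum_add_distrib, ← sum_sub_distrib]
  refine sum_congr rfl fun j _ ↦ ?_
  simp only [u, add_comm 1 j, Nat.add_sub_add_right]
  push_cast
  ring

end WindowSums

section GradientInequalities

variable {E : Type*} [NormedAddCommGroup E] [InnerProductSpace ℝ E]

-- Completing the square: `0 ≤ ‖G + μ • v‖²`.
lemma two_mul_mul_sub_le_norm_sq_of_quadratic_lower_bound {G v : E} {μ a b : ℝ} (hμ : 0 ≤ μ)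
    (hab : a + ⟪G, v⟫ + μ / 2 * ‖v‖ ^ 2 ≤ b) : 2 * μ * (a - b) ≤ ‖G‖ ^ 2 := by
  have square_nonneg : 0 ≤ ‖G‖ ^ 2 + 2 * (μ * ⟪G, v⟫) + (μ * ‖v‖) ^ 2 := by
    rw [← Real.norm_of_nonneg hμ, ← norm_smul, Real.norm_of_nonneg hμ, ← inner_smul_right,
      ← norm_add_sq_real]
    positivity
  linarith [mul_le_mul_of_nonneg_left hab hμ]

variable [CompleteSpace E] {f : E → ℝ} {L : ℝ≥0}

lemma le_add_inner_gradient_add_of_lipschitzWith_gradient (hf : Differentiable ℝ f)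
    (hL : LipschitzWith L (gradient f)) (y v : E) :
    f (y + v) ≤ f y + ⟪gradient f y, v⟫ + L / 2 * ‖v‖ ^ 2 := by
  let φ : ℝ → ℝ := fun t ↦ f (y + t • v)
  let B : ℝ → ℝ := fun t ↦ f y + t * ⟪gradient f y, v⟫ + L / 2 * ‖v‖ ^ 2 * t ^ 2
  have hφ (t : ℝ) : HasDerivAt φ ⟪gradient f (y + t • v), v⟫ t := by
    have hline : HasDerivAt (fun t : ℝ ↦ y + t • v) v t := by
      simpa using ((hasDerivAt_id t).smul_const v).const_add y
    rw [inner_gradient_left]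
    exact (hf (y + t • v)).hasFDerivAt.comp_hasDerivAt t hline
  have hB (t : ℝ) : HasDerivAt B (⟪gradient f y, v⟫ + L * ‖v‖ ^ 2 * t) t := by
    refine ((((hasDerivAt_id t).mul_const ⟪gradient f y, v⟫).const_add (f y)).add
      ((hasDerivAt_pow 2 t).const_mul (L / 2 * ‖v‖ ^ 2))).congr_deriv ?_
    norm_num
    ring
  have deriv_le (t : ℝ) (ht : t ∈ Set.Ico (0 : ℝ) 1) :
      ⟪gradient f (y + t • v), v⟫ ≤ ⟪gradient f y, v⟫ + L * ‖v‖ ^ 2 * t := by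
    rw [← sub_le_iff_le_add', ← inner_sub_left]
    calc ⟪gradient f (y + t • v) - gradient f y, v⟫
        ≤ ‖gradient f (y + t • v) - gradient f y‖ * ‖v‖ := real_inner_le_norm _ _
      _ ≤ L * ‖y + t • v - y‖ * ‖v‖ := by gcongr; exact hL.norm_sub_le _ _
      _ = L * ‖v‖ ^ 2 * t := by
        rw [add_sub_cancel_left, norm_smul, Real.norm_of_nonneg ht.1]
        ring
  have φ_le_B : φ 1 ≤ B 1 :=
    image_le_of_deriv_right_le_deriv_boundary
      (fun t _ ↦ (hφ t).continuousAt.continuousWithinAt) (fun t _ ↦ (hφ t).hasDerivWithinAt)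
      (by simp [φ, B]) (fun t _ ↦ (hB t).continuousAt.continuousWithinAt)
      (fun t _ ↦ (hB t).hasDerivWithinAt) deriv_le (Set.right_mem_Icc.2 zero_le_one)
  simpa [φ, B] using φ_le_B

lemma apply_sub_smul_le_of_lipschitzWith_gradient (hf : Differentiable ℝ f)
    (hL : LipschitzWith L (gradient f)) (α : ℝ) (y g : E) :
    f (y - α • g) ≤ f y - α / 2 * ‖gradient f y‖ ^ 2 - α / 2 * (1 - L * α) * ‖g‖ ^ 2
      + α / 2 * ‖gradient f y - g‖ ^ 2 := by
  have descent := le_add_inner_gradient_add_of_lipschitzWith_gradient hf hL y (-(α • g))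
  rw [← sub_eq_add_neg, inner_neg_right, inner_smul_right, norm_neg, norm_smul, mul_pow,
    Real.norm_eq_abs, sq_abs] at descent
  rw [norm_sub_sq_real]
  linarith

lemma le_of_quadratic_lower_bound_of_lipschitzWith_gradient [Nontrivial E] {μ : ℝ}
    (hf : Differentiable ℝ f) (hL : LipschitzWith L (gradient f))
    (hμ : ∀ y z, f y + ⟪gradient f y, z - y⟫ + μ / 2 * ‖z - y‖ ^ 2 ≤ f z) : μ ≤ L := by
  obtain ⟨v, hv⟩ := exists_ne (0 : E)
  have upper := le_add_inner_gradient_add_of_lipschitzWith_gradient hf hL 0 v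
  have lower := hμ 0 v
  rw [zero_add] at upper
  rw [sub_zero] at lower
  have : 0 < ‖v‖ ^ 2 := by positivity
  exact le_of_mul_le_mul_right (by linarith) this

end GradientInequalities

section Averages

variable {ι E : Type*} [Fintype ι] [NormedAddCommGroup E]

lemma norm_inv_card_smul_sum_sub_le [NormedSpace ℝ E] [Nonempty ι] {u v : ι → E} {C : ℝ}
    (huv : ∀ i, ‖u i - v i‖ ≤ C) :
    ‖(Fintype.card ι : ℝ)⁻¹ • ∑ i, u i - (Fintype.card ι : ℝ)⁻¹ • ∑ i, v i‖ ≤ C := by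
  rw [← smul_sub, ← sum_sub_distrib, norm_smul, norm_inv, Real.norm_natCast,
    inv_mul_le_iff₀ (by exact_mod_cast Fintype.card_pos)]
  simpa using norm_sum_le_of_le univ fun i _ ↦ huv i

variable [InnerProductSpace ℝ E] [CompleteSpace E] {fi : ι → E → ℝ} {f : E → ℝ}

lemma hasGradientAt_average (hfi : ∀ i, Differentiable ℝ (fi i))
    (hf : ∀ z, f z = (∑ i, fi i z) / Fintype.card ι) (z : E) :
    HasGradientAt f ((Fintype.card ι : ℝ)⁻¹ • ∑ i, gradient (fi i) z) z := by
  have hf' : f = fun z ↦ (Fintype.card ι : ℝ)⁻¹ • ∑ i, fi i z := by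
    funext z
    rw [hf, smul_eq_mul, div_eq_inv_mul]
  have hsum : HasFDerivAt (fun z ↦ ∑ i, fi i z)
      (∑ i, InnerProductSpace.toDual ℝ E (gradient (fi i) z)) z :=
    .fun_sum fun i _ ↦ (hfi i z).hasGradientAt.hasFDerivAt
  rw [hasGradientAt_iff_hasFDerivAt, hf']
  simpa using hsum.fun_const_smul (Fintype.card ι : ℝ)⁻¹

lemma lipschitzWith_gradient_average [Nonempty ι] {L : ℝ≥0} (hfi : ∀ i, Differentiable ℝ (fi i))
    (hL : ∀ i, LipschitzWith L (gradient (fi i)))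
    (hf : ∀ z, f z = (∑ i, fi i z) / Fintype.card ι) : LipschitzWith L (gradient f) := by
  refine .of_dist_le_mul fun y z ↦ ?_
  rw [dist_eq_norm, dist_eq_norm, (hasGradientAt_average hfi hf y).gradient,
    (hasGradientAt_average hfi hf z).gradient]
  exact norm_inv_card_smul_sum_sub_le fun i ↦ (hL i).norm_sub_le y z

end Averages

section SAG

/-- Every index is sampled by `idx` within the `τ` steps preceding any step `k` with
`τ ≤ k < K`. -/
def BoundedStaleness {ι : Type*} (idx : ℕ → ι) (τ K : ℕ) : Prop :=
  ∀ i k, τ ≤ k → k < K → ∃ j, k - τ ≤ j ∧ j < k ∧ idx j = i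

/-- The iterates `x`, directions `g` and gradient table `h` of the stochastic average gradient
method with component gradients `G`, sampled indices `idx` and step size `α`. The initial iterate
and table are arbitrary. -/
structure IsSAGRun {ι E : Type*} [Fintype ι] [DecidableEq ι] [NormedAddCommGroup E]
    [NormedSpace ℝ E] (G : ι → E → E) (idx : ℕ → ι) (α : ℝ) (x g : ℕ → E) (h : ι → ℕ → E) :
    Prop where
  table_succ : ∀ i k, h i (k + 1) = if idx k = i then G i (x k) else h i k
  direction_eq : ∀ k, g k = (Fintype.card ι : ℝ)⁻¹ • (∑ i, h i k)
    + (Fintype.card ι : ℝ)⁻¹ • (G (idx k) (x k) - h (idx k) k)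
  iterate_succ : ∀ k, x (k + 1) = x k - α • g k

/-- The paper's `V_k`: the gap between `f (x k)` and the reference value `m`, for which the paper
takes `f x*`, plus the energy `L α² W_k` of the recent directions. -/
def sagLyapunov {E : Type*} [NormedAddCommGroup E] (f : E → ℝ) (m L α : ℝ) (τ : ℕ) (x g : ℕ → E)
    (k : ℕ) : ℝ :=
  f (x k) - m + L * α ^ 2 * weightedWindowSum τ (fun i ↦ ‖g i‖ ^ 2) k

lemma sagLyapunov_nonneg {E : Type*} [NormedAddCommGroup E] {f : E → ℝ} {m L α : ℝ} {τ : ℕ}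
    {x g : ℕ → E} {k : ℕ} (hm : m ≤ f (x k)) (hL : 0 ≤ L) : 0 ≤ sagLyapunov f m L α τ x g k :=
  add_nonneg (sub_nonneg.2 hm)
    (mul_nonneg (by positivity) (weightedWindowSum_nonneg fun _ ↦ by positivity))

namespace IsSAGRun

variable {ι E : Type*} [Fintype ι] [DecidableEq ι] [NormedAddCommGroup E]
  {idx : ℕ → ι} {α : ℝ} {x g : ℕ → E} {h : ι → ℕ → E} {τ k : ℕ} {L : ℝ≥0}

section Normed

variable [NormedSpace ℝ E] {G : ι → E → E}

lemma exists_table_eq (hrun : IsSAGRun G idx α x g h) {j : ℕ} (hj : j < k) :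
    ∃ s, j ≤ s ∧ s < k ∧ h (idx j) k = G (idx j) (x s) := by
  induction k, hj using Nat.le_induction with
  | base => exact ⟨j, le_rfl, j.lt_succ_self, by rw [hrun.table_succ, if_pos rfl]⟩
  | succ k hj ih =>
    by_cases hk : idx k = idx j
    · exact ⟨k, Nat.le_of_succ_le hj, k.lt_succ_self, by rw [hrun.table_succ, if_pos hk]⟩
    · obtain ⟨s, hjs, hsk, hs⟩ := ih
      exact ⟨s, hjs, hsk.trans k.lt_succ_self, by rw [hrun.table_succ, if_neg hk, hs]⟩

lemma direction_eq_average_table_succ (hrun : IsSAGRun G idx α x g h) (k : ℕ) :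
    g k = (Fintype.card ι : ℝ)⁻¹ • ∑ i, h i (k + 1) := by
  have table_succ_eq_add (i : ι) :
      h i (k + 1) = h i k + if idx k = i then G i (x k) - h i k else 0 := by
    rw [hrun.table_succ]
    split_ifs <;> simp
  simp [hrun.direction_eq, table_succ_eq_add, sum_add_distrib]

lemma norm_iterate_sub_le (hrun : IsSAGRun G idx α x g h) (hα : 0 ≤ α) (hk : τ ≤ k) {s : ℕ}
    (hs : k - τ ≤ s) (hsk : s ≤ k) : ‖x k - x s‖ ≤ α * windowSum τ (fun i ↦ ‖g i‖) k := by
  have dist_succ (i : ℕ) : dist (x i) (x (i + 1)) = α * ‖g i‖ := by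
    rw [hrun.iterate_succ, dist_eq_norm, sub_sub_cancel, norm_smul, Real.norm_of_nonneg hα]
  calc ‖x k - x s‖ = dist (x s) (x k) := by rw [dist_comm, dist_eq_norm]
    _ ≤ ∑ i ∈ Ico s k, α * ‖g i‖ := by simpa only [dist_succ] using dist_le_Ico_sum_dist x hsk
    _ ≤ ∑ i ∈ Ico (k - τ) k, α * ‖g i‖ :=
      sum_le_sum_of_subset_of_nonneg (Ico_subset_Ico_left hs) fun _ _ _ ↦ by positivity
    _ = α * windowSum τ (fun i ↦ ‖g i‖) k := by rw [windowSum_eq_sum_Ico hk, mul_sum]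

lemma norm_average_sub_direction_sq_le (hrun : IsSAGRun G idx α x g h) {K : ℕ}
    (hG : ∀ i, LipschitzWith L (G i)) (hα : 0 ≤ α) (hstale : BoundedStaleness idx τ K)
    (hk : τ ≤ k) (hkK : k + 1 < K) :
    ‖(Fintype.card ι : ℝ)⁻¹ • ∑ i, G i (x k) - g k‖ ^ 2
      ≤ (L * α) ^ 2 * (τ * windowSum τ (fun i ↦ ‖g i‖ ^ 2) k) := by
  have : Nonempty ι := ⟨idx 0⟩
  have table_error (i : ι) :
      ‖G i (x k) - h i (k + 1)‖ ≤ L * (α * windowSum τ (fun i ↦ ‖g i‖) k) := by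
    obtain ⟨j, hj, hjk, rfl⟩ := hstale i (k + 1) (Nat.le_succ_of_le hk) hkK
    obtain ⟨s, hjs, hsk, hs⟩ := hrun.exists_table_eq hjk
    rw [hs]
    refine ((hG _).norm_sub_le _ _).trans ?_
    gcongr
    exact hrun.norm_iterate_sub_le hα hk (by omega) (by omega)
  calc ‖(Fintype.card ι : ℝ)⁻¹ • ∑ i, G i (x k) - g k‖ ^ 2
      ≤ (L * (α * windowSum τ (fun i ↦ ‖g i‖) k)) ^ 2 := by
        rw [hrun.direction_eq_average_table_succ]
        gcongr
        exact norm_inv_card_smul_sum_sub_le table_error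
    _ = (L * α) ^ 2 * windowSum τ (fun i ↦ ‖g i‖) k ^ 2 := by ring
    _ ≤ (L * α) ^ 2 * (τ * windowSum τ (fun i ↦ ‖g i‖ ^ 2) k) := by
        gcongr
        exact sq_windowSum_le

end Normed

variable [InnerProductSpace ℝ E] [CompleteSpace E] {fi : ι → E → ℝ} {f : E → ℝ}

lemma apply_iterate_succ_le (hrun : IsSAGRun (fun i ↦ gradient (fi i)) idx α x g h) {K : ℕ}
    (hdiff : ∀ i, Differentiable ℝ (fi i)) (hsmooth : ∀ i, LipschitzWith L (gradient (fi i)))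
    (hf : ∀ z, f z = (∑ i, fi i z) / Fintype.card ι) (hα : 0 ≤ α)
    (hstale : BoundedStaleness idx τ K) (hk : τ ≤ k) (hkK : k + 1 < K) :
    f (x (k + 1)) ≤ f (x k) - α / 2 * ‖gradient f (x k)‖ ^ 2 - α / 2 * (1 - L * α) * ‖g k‖ ^ 2
      + α / 2 * ((L * α) ^ 2 * (τ * windowSum τ (fun i ↦ ‖g i‖ ^ 2) k)) := by
  have : Nonempty ι := ⟨idx 0⟩
  have gradient_error := hrun.norm_average_sub_direction_sq_le hsmooth hα hstale hk hkK
  rw [← (hasGradientAt_average hdiff hf (x k)).gradient] at gradient_error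
  rw [hrun.iterate_succ]
  refine (apply_sub_smul_le_of_lipschitzWith_gradient
    (fun z ↦ (hasGradientAt_average hdiff hf z).differentiableAt)
    (lipschitzWith_gradient_average hdiff hsmooth hf) α (x k) (g k)).trans ?_
  gcongr

end IsSAGRun

theorem sag_lyapunov_contraction_general {ι E : Type*} [Fintype ι] [DecidableEq ι]
    [NormedAddCommGroup E] [InnerProductSpace ℝ E] [CompleteSpace E] {L : ℝ≥0} {μ m α : ℝ}
    {fi : ι → E → ℝ} (hdiff : ∀ i, Differentiable ℝ (fi i))
    (hsmooth : ∀ i, LipschitzWith L (gradient (fi i)))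
    {f : E → ℝ} (hf : ∀ z, f z = (∑ i, fi i z) / Fintype.card ι)
    (hPL : ∀ z, 2 * μ * (f z - m) ≤ ‖gradient f z‖ ^ 2) (hμL : μ ≤ L)
    {τ K : ℕ} (hτ : 1 ≤ τ) (hα : 0 ≤ α) (hαL : L * α * τ ≤ 1 / 3)
    {idx : ℕ → ι} (hstale : BoundedStaleness idx τ K)
    {x g : ℕ → E} {h : ι → ℕ → E} (hrun : IsSAGRun (fun i ↦ gradient (fi i)) idx α x g h)
    {k : ℕ} (hk : τ ≤ k) (hkK : k + 1 < K) :
    sagLyapunov f m L α τ x g (k + 1) ≤ (1 - α * μ) * sagLyapunov f m L α τ x g k := by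
  have descent := hrun.apply_iterate_succ_le hdiff hsmooth hf hα hstale hk hkK
  rw [sagLyapunov, sagLyapunov, weightedWindowSum_succ]
  set S := windowSum τ (fun i ↦ ‖g i‖ ^ 2) k
  set W := weightedWindowSum τ (fun i ↦ ‖g i‖ ^ 2) k
  have hS : 0 ≤ S := windowSum_nonneg fun _ ↦ by positivity
  have hW : 0 ≤ W := weightedWindowSum_nonneg fun _ ↦ by positivity
  have hWS : W ≤ τ * S := weightedWindowSum_le_mul_windowSum fun _ ↦ by positivity
  have gap_le : α * μ * (f (x k) - m) ≤ α / 2 * ‖gradient f (x k)‖ ^ 2 := by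
    linarith [mul_le_mul_of_nonneg_left (hPL (x k)) hα]
  have direction_cost_le :
      L * α ^ 2 * (τ * ‖g k‖ ^ 2) ≤ α / 2 * (1 - L * α) * ‖g k‖ ^ 2 := by
    have hLα : L * α ≤ 1 / 3 :=
      (le_mul_of_one_le_right (by positivity) (by exact_mod_cast hτ)).trans hαL
    calc L * α ^ 2 * (τ * ‖g k‖ ^ 2) = L * α * τ * (α * ‖g k‖ ^ 2) := by ring
      _ ≤ (1 - L * α) / 2 * (α * ‖g k‖ ^ 2) := by gcongr; linarith
      _ = α / 2 * (1 - L * α) * ‖g k‖ ^ 2 := by ring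
  have window_cost_le :
      α * μ * (L * α ^ 2 * W) + α / 2 * ((L * α) ^ 2 * (τ * S)) ≤ L * α ^ 2 * S := by
    have hLS : L * α * τ * S ≤ 1 / 3 * S := by gcongr
    have hμW : α * μ * W ≤ L * α * τ * S := by
      calc α * μ * W ≤ α * L * (τ * S) := by gcongr
        _ = L * α * τ * S := by ring
    calc α * μ * (L * α ^ 2 * W) + α / 2 * ((L * α) ^ 2 * (τ * S))
        = L * α ^ 2 * (α * μ * W + L * α * τ * S / 2) := by ring
      _ ≤ L * α ^ 2 * S := by gcongr; linarith
  linarith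

end SAG

/- STATEMENT 6 (SAG one-step Lyapunov contraction, strongly convex case). -/
theorem sag_lyapunov_contraction (d N : ℕ) (hd : 1 ≤ d) (hN : 1 ≤ N)
    (L μ : ℝ) (hL : 0 < L) (hμ : 0 < μ)
    (fi : Fin N → EuclideanSpace ℝ (Fin d) → ℝ)
    (hdiff : ∀ i, Differentiable ℝ (fi i))
    (hsmooth : ∀ i x y, ‖gradient (fi i) x - gradient (fi i) y‖ ≤ L * ‖x - y‖)
    (f : EuclideanSpace ℝ (Fin d) → ℝ)
    (hf : ∀ z, f z = (∑ i, fi i z) / N)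
    (hsc : ∀ y z, f y + ⟪gradient f y, z - y⟫ + μ / 2 * ‖z - y‖ ^ 2 ≤ f z)
    (xstar : EuclideanSpace ℝ (Fin d)) (hmin : ∀ y, f xstar ≤ f y)
    (τ K : ℕ) (hτ : 1 ≤ τ) (hK : τ + 1 < K)
    (idx : ℕ → Fin N) (α : ℝ) (hα : α = 1 / (16 * L * τ))
    (x g : ℕ → EuclideanSpace ℝ (Fin d))
    (h : Fin N → ℕ → EuclideanSpace ℝ (Fin d))
    (hx0 : x 0 = 0)
    (hh0 : ∀ i, h i 0 = 0)
    (hhrec : ∀ i k, h i (k + 1) = if idx k = i then gradient (fi i) (x k) else h i k)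
    (hg : ∀ k, g k = (N : ℝ)⁻¹ • (∑ i, h i k)
      + (N : ℝ)⁻¹ • (gradient (fi (idx k)) (x k) - h (idx k) k))
    (hxrec : ∀ k, x (k + 1) = x k - α • g k)
    (hstale : ∀ i : Fin N, ∀ k : ℕ, τ ≤ k → k ≤ K - 1 →
      ∃ j : ℕ, k - τ ≤ j ∧ j < k ∧ idx j = i)
    (V : ℕ → ℝ)
    (hV : ∀ k, V k = f (x k) - f xstar
      + L * α ^ 2 * ∑ j ∈ Finset.Icc 1 τ, ((τ : ℝ) - j + 1) * ‖g (k - j)‖ ^ 2) :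
    ∀ k : ℕ, τ ≤ k → k ≤ K - 2 → V (k + 1) ≤ (1 - α * μ / 4) * V k := by
  intro k hk hkK
  lift L to ℝ≥0 using hL.le
  have : Nonempty (Fin N) := ⟨idx 0⟩
  have : Nonempty (Fin d) := ⟨⟨0, hd⟩⟩
  have hα0 : 0 ≤ α := by rw [hα]; positivity
  have hαL : L * α * τ ≤ 1 / 3 := by rw [hα]; field_simp; norm_num
  have hsmooth' (i : Fin N) : LipschitzWith L (gradient (fi i)) :=
    .of_dist_le_mul fun y z ↦ by simpa only [dist_eq_norm] using hsmooth i y z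
  have hf' (z) : f z = (∑ i, fi i z) / Fintype.card (Fin N) := by rw [hf, Fintype.card_fin]
  have hPL (z) : 2 * μ * (f z - f xstar) ≤ ‖gradient f z‖ ^ 2 :=
    two_mul_mul_sub_le_norm_sq_of_quadratic_lower_bound hμ.le (hsc z xstar)
  have hμL : μ ≤ L := le_of_quadratic_lower_bound_of_lipschitzWith_gradient
    (fun z ↦ (hasGradientAt_average hdiff hf' z).differentiableAt)
    (lipschitzWith_gradient_average hdiff hsmooth' hf') hsc
  have hrun : IsSAGRun (fun i ↦ gradient (fi i)) idx α x g h :=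
    ⟨hhrec, by simpa only [Fintype.card_fin] using hg, hxrec⟩
  have hstale' : BoundedStaleness idx τ K :=
    fun i k hk hkK ↦ hstale i k hk (Nat.le_sub_one_of_lt hkK)
  obtain rfl : V = sagLyapunov f (f xstar) L α τ x g := funext hV
  refine (sag_lyapunov_contraction_general hdiff hsmooth' hf' hPL hμL hτ hα0 hαL hstale' hrun hk
    (by omega)).trans (mul_le_mul_of_nonneg_right ?_ (sagLyapunov_nonneg (hmin _) hL.le))
  linarith [mul_nonneg hα0 hμ.le]
end

section
/- Fix an integer τ ≥ 1 and set α = 1/(16 L τ). For any sampling sequence, the SAGA iterates satisfy ‖x_k‖ ≤ B for every k with 0 ≤ k ≤ τ. -/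
/-!
While the iterates stay in the ball of radius `B`, every component gradient they meet has norm at
most `M = 2LB`, since it is `L`-Lipschitz and vanishes at a point of that ball. So the SAGA
direction, a sum of three terms of norm at most `M`, moves the iterate by at most
`3Mα = 6LBα ≤ B / τ`. Starting from the origin, `τ` such steps cannot leave the ball.
-/

open Metric
open scoped NNReal

section Saga

variable {ι E : Type*} [Fintype ι] [SeminormedAddCommGroup E] [NormedSpace ℝ E]

/-- The SAGA direction `(1/N) ∑ j, h j + v - h i`, where `h` is the table of stored gradients,
`i` the sampled index and `v` the fresh gradient of the `i`-th component. -/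
noncomputable def sagaDirection (h : ι → E) (i : ι) (v : E) : E :=
  (Fintype.card ι : ℝ)⁻¹ • ∑ j, h j + (v - h i)

/-- The sequence `x` and the tables `fun i ↦ h i k` are a run of SAGA from the origin and an empty
table, with step size `α`, sampled indices `idx` and operators `G i` as component gradients. -/
structure IsSagaRun [DecidableEq ι] (G : ι → E → E) (idx : ℕ → ι) (α : ℝ) (x : ℕ → E)
    (h : ι → ℕ → E) : Prop where
  iterate_zero : x 0 = 0
  table_zero : ∀ i, h i 0 = 0
  table_succ : ∀ i k, h i (k + 1) = if idx k = i then G i (x k) else h i k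
  iterate_succ : ∀ k, x (k + 1) = x k - α • sagaDirection (h · k) (idx k) (G (idx k) (x k))

theorem norm_inv_card_smul_sum_le_s9 [Nonempty ι] {h : ι → E} {M : ℝ} (hM : ∀ i, ‖h i‖ ≤ M) :
    ‖(Fintype.card ι : ℝ)⁻¹ • ∑ i, h i‖ ≤ M := by
  have card_pos : (0 : ℝ) < Fintype.card ι := mod_cast Fintype.card_pos
  rw [norm_smul, norm_inv, Real.norm_natCast, inv_mul_le_iff₀ card_pos, ← nsmul_eq_mul]
  exact norm_sum_le_of_le _ (fun i _ ↦ hM i) |>.trans_eq (by simp)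

theorem norm_sagaDirection_le {h : ι → E} {i : ι} {v : E} {M : ℝ} (hM : ∀ j, ‖h j‖ ≤ M)
    (hv : ‖v‖ ≤ M) : ‖sagaDirection h i v‖ ≤ 3 * M := by
  have : Nonempty ι := ⟨i⟩
  calc ‖sagaDirection h i v‖
      ≤ ‖(Fintype.card ι : ℝ)⁻¹ • ∑ j, h j‖ + (‖v‖ + ‖h i‖) :=
        norm_add_le_of_le le_rfl (norm_sub_le _ _)
    _ ≤ M + (M + M) := by gcongr; exacts [norm_inv_card_smul_sum_le_s9 hM, hM i]
    _ = 3 * M := by ring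

namespace IsSagaRun

variable [DecidableEq ι] {G : ι → E → E} {idx : ℕ → ι} {α M B : ℝ} {x : ℕ → E}
  {h : ι → ℕ → E} {k τ : ℕ}

theorem norm_table_succ_le (saga : IsSagaRun G idx α x h) (hM : ∀ i, ‖h i k‖ ≤ M)
    (hG : ‖G (idx k) (x k)‖ ≤ M) (i : ι) : ‖h i (k + 1)‖ ≤ M := by
  rw [saga.table_succ]
  split_ifs with sampled
  · exact sampled ▸ hG
  · exact hM i

theorem norm_iterate_succ_le (saga : IsSagaRun G idx α x h) (hM : ∀ i, ‖h i k‖ ≤ M)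
    (hG : ‖G (idx k) (x k)‖ ≤ M) : ‖x (k + 1)‖ ≤ ‖x k‖ + |α| * (3 * M) := by
  rw [saga.iterate_succ]
  refine norm_sub_le_of_le le_rfl ?_
  rw [norm_smul, Real.norm_eq_abs]
  gcongr
  exact norm_sagaDirection_le hM hG

theorem norm_iterate_le_and_norm_table_le (saga : IsSagaRun G idx α x h) (hM : 0 ≤ M)
    (hG : ∀ i, ∀ y ∈ closedBall 0 B, ‖G i y‖ ≤ M) (hα : τ * (|α| * (3 * M)) ≤ B) (hk : k ≤ τ) :
    ‖x k‖ ≤ k * (|α| * (3 * M)) ∧ ∀ i, ‖h i k‖ ≤ M := by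
  induction k with
  | zero => simp [saga.iterate_zero, saga.table_zero, hM]
  | succ k ih =>
    obtain ⟨iterate_le, table_le⟩ := ih (by lia)
    have iterate_mem : x k ∈ closedBall 0 B := by
      rw [mem_closedBall_zero_iff]
      calc ‖x k‖ ≤ k * (|α| * (3 * M)) := iterate_le
        _ ≤ τ * (|α| * (3 * M)) := by gcongr; lia
        _ ≤ B := hα
    have gradient_le := hG (idx k) (x k) iterate_mem
    refine ⟨?_, saga.norm_table_succ_le table_le gradient_le⟩
    calc ‖x (k + 1)‖ ≤ ‖x k‖ + |α| * (3 * M) := saga.norm_iterate_succ_le table_le gradient_le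
      _ ≤ k * (|α| * (3 * M)) + |α| * (3 * M) := by gcongr
      _ = (k + 1 : ℕ) * (|α| * (3 * M)) := by push_cast; ring

theorem norm_iterate_le (saga : IsSagaRun G idx α x h) (hM : 0 ≤ M)
    (hG : ∀ i, ∀ y ∈ closedBall 0 B, ‖G i y‖ ≤ M) (hα : τ * (|α| * (3 * M)) ≤ B) (hk : k ≤ τ) :
    ‖x k‖ ≤ B :=
  calc ‖x k‖ ≤ k * (|α| * (3 * M)) := (saga.norm_iterate_le_and_norm_table_le hM hG hα hk).1
    _ ≤ τ * (|α| * (3 * M)) := by gcongr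
    _ ≤ B := hα

end IsSagaRun

end Saga

theorem norm_le_of_lipschitzOnWith_closedBall_of_eq_zero {E F : Type*} [SeminormedAddCommGroup E]
    [SeminormedAddCommGroup F] {G : E → F} {K : ℝ≥0} {B : ℝ} {y z : E}
    (hG : LipschitzOnWith K G (closedBall 0 B)) (hz : z ∈ closedBall 0 B) (hGz : G z = 0)
    (hy : y ∈ closedBall 0 B) : ‖G y‖ ≤ 2 * K * B := by
  rw [mem_closedBall_zero_iff] at *
  calc ‖G y‖ = ‖G y - G z‖ := by rw [hGz, sub_zero]
    _ ≤ K * ‖y - z‖ := hG.norm_sub_le (by simpa) (by simpa)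
    _ ≤ K * (B + B) := by gcongr; exact norm_sub_le_of_le hy hz
    _ = 2 * K * B := by ring

theorem gradient_eq_zero_of_isLocalMin {E : Type*} [NormedAddCommGroup E] [InnerProductSpace ℝ E]
    [CompleteSpace E] {f : E → ℝ} {a : E} (ha : IsLocalMin f a) : gradient f a = 0 := by
  rw [gradient, ha.fderiv_eq_zero, map_zero]

theorem saga_bounded_iterates_general {ι E : Type*} [Fintype ι] [DecidableEq ι]
    [SeminormedAddCommGroup E] [NormedSpace ℝ E] {G : ι → E → E} {K : ℝ≥0} {B : ℝ}
    (hG : ∀ i, LipschitzOnWith K (G i) (closedBall 0 B)) {z : ι → E} (hGz : ∀ i, G i (z i) = 0)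
    (hz : ∀ i, ‖z i‖ ≤ B) {τ : ℕ} {α : ℝ} (hα : 6 * K * τ * |α| ≤ 1) {idx : ℕ → ι} {x : ℕ → E}
    {h : ι → ℕ → E} (saga : IsSagaRun G idx α x h) {k : ℕ} (hk : k ≤ τ) : ‖x k‖ ≤ B := by
  have B_nonneg : 0 ≤ B := (norm_nonneg _).trans (hz (idx 0))
  refine saga.norm_iterate_le (M := 2 * K * B) (by positivity) (fun i y hy ↦ ?_) ?_ hk
  · exact norm_le_of_lipschitzOnWith_closedBall_of_eq_zero (hG i) (by simpa using hz i) (hGz i) hy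
  · calc τ * (|α| * (3 * (2 * K * B))) = 6 * K * τ * |α| * B := by ring
      _ ≤ B := mul_le_of_le_one_left B_nonneg hα

theorem saga_bounded_iterates (d N : ℕ) (hd : 1 ≤ d) (hN : 1 ≤ N) (L : ℝ) (hL : 0 < L)
    (fi : Fin N → EuclideanSpace ℝ (Fin d) → ℝ)
    (hdiff : ∀ i, Differentiable ℝ (fi i))
    (hsmooth : ∀ i x y, ‖gradient (fi i) x - gradient (fi i) y‖ ≤ L * ‖x - y‖)
    (f : EuclideanSpace ℝ (Fin d) → ℝ)
    (hf : ∀ z, f z = (∑ i, fi i z) / N)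
    (xstar : EuclideanSpace ℝ (Fin d)) (hmin : ∀ y, f xstar ≤ f y)
    (xistar : Fin N → EuclideanSpace ℝ (Fin d))
    (hxi : ∀ i y, fi i (xistar i) ≤ fi i y)
    (B : ℝ) (hB : B = max ‖xstar‖ (⨆ i, ‖xistar i‖))
    (τ : ℕ) (hτ : 1 ≤ τ)
    (idx : ℕ → Fin N) (α : ℝ) (hα : α = 1 / (16 * L * τ))
    (x g : ℕ → EuclideanSpace ℝ (Fin d))
    (h : Fin N → ℕ → EuclideanSpace ℝ (Fin d))
    (hx0 : x 0 = 0)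
    (hh0 : ∀ i, h i 0 = 0)
    (hhrec : ∀ i k, h i (k + 1) = if idx k = i then gradient (fi i) (x k) else h i k)
    (hg : ∀ k, g k = (N : ℝ)⁻¹ • (∑ i, h i k)
      + (gradient (fi (idx k)) (x k) - h (idx k) k))
    (hxrec : ∀ k, x (k + 1) = x k - α • g k) :
    ∀ k : ℕ, k ≤ τ → ‖x k‖ ≤ B := by
  have saga : IsSagaRun (fun i ↦ gradient (fi i)) idx α x h :=
    ⟨hx0, hh0, hhrec, fun k ↦ by rw [hxrec, hg, sagaDirection, Fintype.card_fin]⟩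
  have lipschitz (i : Fin N) : LipschitzWith ⟨L, hL.le⟩ (gradient (fi i)) :=
    lipschitzWith_iff_norm_sub_le.2 (hsmooth i)
  have norm_xistar_le (i : Fin N) : ‖xistar i‖ ≤ B :=
    hB ▸ le_max_of_le_right (le_ciSup (f := (‖xistar ·‖)) (Set.finite_range _).bddAbove i)
  have step_le : 6 * L * τ * |α| ≤ 1 := by
    rw [hα, abs_of_pos (by positivity)]
    field_simp
    norm_num
  exact fun k hk ↦ saga_bounded_iterates_general (fun i ↦ (lipschitz i).lipschitzOnWith)
    (fun i ↦ gradient_eq_zero_of_isLocalMin (.of_forall (hxi i))) norm_xistar_le step_le saga hk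
end
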